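/- Let 0 < α < 1 and define the Grünwald weights w_k = (-1)^k · C(α, k). Let E ≥ 0, and let (e_n)_{n≥1} be a sequence of non-negative real numbers such that for every n ≥ 1, e_n ≤ − Σ_{k=1}^{n-1} w_k · e_{n-k} + B_n, where the non-negative numbers B_n satisfy B_n ≤ (Σ_{k=0}^{n-1} w_k) · E for all n ≥ 1. Then e_n ≤ E for every n ≥ 1. -/

import Mathlib

/-- The Grünwald weights `w_k = (-1)^k C(α, k)`, where
`C(α, k) = α(α-1)⋯(α-k+1)/k!` is the generalized binomial coefficient. -/
noncomputable def grunwaldWeight (α : ℝ) (k : ℕ) : ℝ :=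
  (-1 : ℝ) ^ k * ((∏ i ∈ Finset.range k, (α - i)) / (k.factorial : ℝ))

theorem grunwaldWeight_succ (α : ℝ) (k : ℕ) :
    grunwaldWeight α (k + 1) = grunwaldWeight α k * ((k - α) / (k + 1)) := by
  unfold grunwaldWeight
  rw [Finset.prod_range_succ, Nat.factorial_succ, pow_succ]
  have h1 : (k.factorial : ℝ) ≠ 0 := by positivity
  have h2 : (k : ℝ) + 1 ≠ 0 := by positivity
  push_cast
  field_simp
  ring

theorem grunwaldWeight_nonpos (α : ℝ) (hα0 : 0 < α) (hα1 : α < 1) (k : ℕ) :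
    grunwaldWeight α (k + 1) ≤ 0 := by
  induction k with
  | zero => simp [grunwaldWeight]; exact hα0.le
  | succ k ih =>
    rw [grunwaldWeight_succ]
    apply mul_nonpos_of_nonpos_of_nonneg ih
    have : (0 : ℝ) ≤ k := k.cast_nonneg
    push_cast
    apply div_nonneg <;> linarith

/-- Discrete error bound: if `(e_n)_{n≥1}` is non-negative and
satisfies `e_n ≤ -Σ_{k=1}^{n-1} w_k e_{n-k} + B_n` with `0 ≤ B_n ≤ (Σ_{k=0}^{n-1} w_k) E`
for all `n ≥ 1`, then `e_n ≤ E` for all `n ≥ 1`. -/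
theorem grunwald_error_recursion_bound
    (α : ℝ) (hα0 : 0 < α) (hα1 : α < 1)
    (E : ℝ) (hE : 0 ≤ E)
    (e B : ℕ → ℝ)
    (he_nonneg : ∀ n : ℕ, 1 ≤ n → 0 ≤ e n)
    (hB_nonneg : ∀ n : ℕ, 1 ≤ n → 0 ≤ B n)
    (hrec : ∀ n : ℕ, 1 ≤ n →
      e n ≤ -(∑ k ∈ Finset.Icc 1 (n - 1), grunwaldWeight α k * e (n - k)) + B n)
    (hB : ∀ n : ℕ, 1 ≤ n → B n ≤ (∑ k ∈ Finset.range n, grunwaldWeight α k) * E) :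
    ∀ n : ℕ, 1 ≤ n → e n ≤ E := by
  intro n
  induction n using Nat.strong_induction_on with
  | _ n ih =>
  intro hn
  have h1 := hrec n hn
  have h2 := hB n hn
  have hs : ∑ k ∈ Finset.range n, grunwaldWeight α k
      = 1 + ∑ k ∈ Finset.Icc 1 (n - 1), grunwaldWeight α k := by
    obtain ⟨m, rfl⟩ : ∃ m, n = m + 1 := ⟨n - 1, by omega⟩
    rw [Finset.range_eq_Ico, Finset.sum_eq_sum_Ico_succ_bot (by omega)]
    have : Finset.Ico (0 + 1) (m + 1) = Finset.Icc 1 (m + 1 - 1) := by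
      ext x; simp only [Finset.mem_Ico, Finset.mem_Icc]; omega
    rw [this]
    simp [grunwaldWeight]
  have h3 : (∑ k ∈ Finset.Icc 1 (n - 1), grunwaldWeight α k) * E
      ≤ ∑ k ∈ Finset.Icc 1 (n - 1), grunwaldWeight α k * e (n - k) := by
    rw [Finset.sum_mul]
    apply Finset.sum_le_sum
    intro k hk
    rw [Finset.mem_Icc] at hk
    obtain ⟨j, rfl⟩ : ∃ j, k = j + 1 := ⟨k - 1, by omega⟩
    exact mul_le_mul_of_nonpos_left (ih _ (by omega) (by omega))
      (grunwaldWeight_nonpos α hα0 hα1 j)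
  rw [hs] at h2
  linarith
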